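/- Let W ⊂ GL(V) be a finite complex reflection group, W′ ⊆ W a subgroup generated by reflections, and E′ a j-inductible irreducible representation of W′, realized as a W′-subrepresentation of S^{b(E′)}(V). Let E be the smallest W-stable subspace of S^{b(E′)}(V) containing E′. Then E is an irreducible representation of W, b(E) = b(E′), and E is itself j-inductible. -/

import Mathlib

namespace Spets

/-- The general linear group of `V = ℂ^n`. -/
abbrev GLn (n : ℕ) := Matrix.GeneralLinearGroup (Fin n) ℂ

/-- The action of a matrix `g` on the symmetric algebra `S(V)` of `V = ℂ^n`,
realized as the polynomial ring, by linear substitution of the variables. -/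
noncomputable def polySub {n : ℕ} (g : Matrix (Fin n) (Fin n) ℂ) :
    MvPolynomial (Fin n) ℂ →ₐ[ℂ] MvPolynomial (Fin n) ℂ :=
  MvPolynomial.aeval fun i => ∑ j, g j i • MvPolynomial.X j

lemma polySub_one {n : ℕ} : polySub (1 : Matrix (Fin n) (Fin n) ℂ) = AlgHom.id ℂ _ := by
  apply MvPolynomial.algHom_ext
  intro i
  simp [polySub, Matrix.one_apply, ite_smul, Finset.sum_ite_eq]

lemma polySub_mul {n : ℕ} (g h : Matrix (Fin n) (Fin n) ℂ) :
    polySub (g * h) = (polySub g).comp (polySub h) := by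
  apply MvPolynomial.algHom_ext
  intro i
  simp only [polySub, MvPolynomial.aeval_X, AlgHom.comp_apply, map_sum, map_smul,
    Matrix.mul_apply, Finset.sum_smul, Finset.smul_sum, smul_smul]
  rw [Finset.sum_comm]
  exact Finset.sum_congr rfl fun y _ => Finset.sum_congr rfl fun x _ => by rw [mul_comm]

/-- The space of `W`-equivariant linear maps from a representation `(ρ, M)` of
`W ⊆ GL(V)` to the `d`-th symmetric power `S^d(V)`, realized as the space of
homogeneous polynomials of degree `d`. -/
noncomputable def homSpace {n : ℕ} (W : Subgroup (GLn n)) {M : Type}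
    [AddCommGroup M] [Module ℂ M] (ρ : Representation ℂ W M) (d : ℕ) :
    Submodule ℂ (M →ₗ[ℂ] MvPolynomial (Fin n) ℂ) where
  carrier := {f | (∀ v, f v ∈ MvPolynomial.homogeneousSubmodule (Fin n) ℂ d) ∧
      ∀ (g : W) (v : M), f (ρ g v) = polySub g.val.val (f v)}
  add_mem' := by
    rintro f₁ f₂ ⟨h₁, h₁'⟩ ⟨h₂, h₂'⟩
    refine ⟨fun v => ?_, fun g v => ?_⟩
    · simpa using add_mem (h₁ v) (h₂ v)
    · simp [h₁' g v, h₂' g v]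
  zero_mem' := ⟨fun v => by simp, fun g v => by simp⟩
  smul_mem' := by
    rintro c f ⟨h, h'⟩
    refine ⟨fun v => ?_, fun g v => ?_⟩
    · simpa using Submodule.smul_mem _ c (h v)
    · simp [h' g v]

/-- The representation `ρ` occurs in `S^d(V)`. -/
def occursIn {n : ℕ} (W : Subgroup (GLn n)) {M : Type} [AddCommGroup M] [Module ℂ M]
    (ρ : Representation ℂ W M) (d : ℕ) : Prop :=
  homSpace W ρ d ≠ ⊥

/-- `b(ρ)`: the smallest degree `d` such that `ρ` occurs in `S^d(V)`. -/
noncomputable def bval {n : ℕ} (W : Subgroup (GLn n)) {M : Type} [AddCommGroup M]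
    [Module ℂ M] (ρ : Representation ℂ W M) : ℕ :=
  sInf {d | occursIn W ρ d}

/-- `p` is a subrepresentation of `(ρ, M)`. -/
def IsSubrep {G M : Type*} [Monoid G] [AddCommGroup M] [Module ℂ M]
    (ρ : Representation ℂ G M) (p : Submodule ℂ M) : Prop :=
  ∀ (g : G) (v : M), v ∈ p → ρ g v ∈ p

/-- Irreducibility of a representation. -/
def IrredRep {G M : Type*} [Monoid G] [AddCommGroup M] [Module ℂ M]
    (ρ : Representation ℂ G M) : Prop :=
  (∃ v : M, v ≠ 0) ∧ ∀ p : Submodule ℂ M, IsSubrep ρ p → p = ⊥ ∨ p = ⊤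

/-- A subspace of the polynomial ring stable under the substitution action of `W`. -/
def StableUnder {n : ℕ} (W : Subgroup (GLn n)) (p : Submodule ℂ (MvPolynomial (Fin n) ℂ)) : Prop :=
  ∀ (g : W) (f : MvPolynomial (Fin n) ℂ), f ∈ p → polySub g.val.val f ∈ p

/-- The representation of `W` on a `W`-stable subspace of the polynomial ring. -/
noncomputable def subRep {n : ℕ} (W : Subgroup (GLn n)) (p : Submodule ℂ (MvPolynomial (Fin n) ℂ))
    (hp : StableUnder W p) : Representation ℂ W p where
  toFun g := (polySub g.val.val).toLinearMap.restrict (fun f hf => hp g f hf)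
  map_one' := by
    apply LinearMap.ext
    rintro ⟨f, hf⟩
    apply Subtype.ext
    show polySub ((1 : W) : GLn n).val f = f
    have h1 : ((1 : W) : GLn n).val = (1 : Matrix (Fin n) (Fin n) ℂ) := rfl
    rw [h1, polySub_one]
    rfl
  map_mul' := by
    intro a b
    apply LinearMap.ext
    rintro ⟨f, hf⟩
    apply Subtype.ext
    show polySub ((a * b : W) : GLn n).val f = polySub a.val.val (polySub b.val.val f)
    have h2 : ((a * b : W) : GLn n).val = a.val.val * b.val.val := rfl
    rw [h2, polySub_mul]
    rfl

/-- The smallest `W`-stable subspace of `S^d(V)` containing `p`. -/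
noncomputable def wSpan {n : ℕ} (W : Subgroup (GLn n)) (d : ℕ)
    (p : Submodule ℂ (MvPolynomial (Fin n) ℂ)) : Submodule ℂ (MvPolynomial (Fin n) ℂ) :=
  sInf {q | q ≤ MvPolynomial.homogeneousSubmodule (Fin n) ℂ d ∧ StableUnder W q ∧ p ≤ q}

lemma wSpan_stable {n : ℕ} (W : Subgroup (GLn n)) (d : ℕ)
    (p : Submodule ℂ (MvPolynomial (Fin n) ℂ)) : StableUnder W (wSpan W d p) := by
  intro g f hf
  rw [wSpan, Submodule.mem_sInf] at hf ⊢
  intro q hq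
  exact hq.2.1 g f (hf q hq)

/-- `g` is a (pseudo-)reflection of `GL(V)`: `g ≠ 1` and `g` fixes a hyperplane
pointwise, i.e. the range of `g - 1` is a line. -/
def IsRefl {n : ℕ} (g : GLn n) : Prop :=
  g.val ≠ 1 ∧ Module.finrank ℂ (LinearMap.range (g.val - 1).mulVecLin) = 1

/-- `W` is generated by its reflections. -/
def IsReflGroup {n : ℕ} (W : Subgroup (GLn n)) : Prop :=
  Subgroup.closure {g | g ∈ W ∧ IsRefl g} = W

lemma aux_homog_stable {n : ℕ} (W : Subgroup (GLn n)) (d : ℕ) :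
    StableUnder W (MvPolynomial.homogeneousSubmodule (Fin n) ℂ d) := by
  intro g f hf
  rw [MvPolynomial.mem_homogeneousSubmodule] at hf ⊢
  have h := MvPolynomial.IsHomogeneous.aeval (n := 1) hf
    (fun i => ∑ j, (g.val.val j i) • (MvPolynomial.X j : MvPolynomial (Fin n) ℂ)) (by
      intro i
      apply MvPolynomial.IsHomogeneous.sum
      intro j _
      rw [MvPolynomial.smul_eq_C_mul]
      exact MvPolynomial.isHomogeneous_C_mul_X _ _)
  rw [one_mul] at h
  exact h

lemma aux_le {n : ℕ} (W : Subgroup (GLn n)) (d : ℕ)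
    (p : Submodule ℂ (MvPolynomial (Fin n) ℂ)) : p ≤ wSpan W d p :=
  le_sInf fun _ hq => hq.2.2

lemma aux_deg {n : ℕ} (W : Subgroup (GLn n)) (d : ℕ)
    (p : Submodule ℂ (MvPolynomial (Fin n) ℂ))
    (hdeg : p ≤ MvPolynomial.homogeneousSubmodule (Fin n) ℂ d) :
    wSpan W d p ≤ MvPolynomial.homogeneousSubmodule (Fin n) ℂ d :=
  sInf_le ⟨le_rfl, aux_homog_stable W d, hdeg⟩

/-- An equivariant map on `wSpan` that vanishes on `p` is zero. -/
lemma aux_zero {n : ℕ} (W : Subgroup (GLn n)) (b d : ℕ)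
    (p : Submodule ℂ (MvPolynomial (Fin n) ℂ))
    (hdeg : p ≤ MvPolynomial.homogeneousSubmodule (Fin n) ℂ b)
    (f : wSpan W b p →ₗ[ℂ] MvPolynomial (Fin n) ℂ)
    (hf : f ∈ homSpace W (subRep W (wSpan W b p) (wSpan_stable W b p)) d)
    (h0 : ∀ v (hv : v ∈ p), f ⟨v, aux_le W b p hv⟩ = 0) : f = 0 := by
  have key : wSpan W b p ≤ (LinearMap.ker f).map (wSpan W b p).subtype := by
    apply sInf_le
    refine ⟨?_, ?_, ?_⟩
    · rintro _ ⟨v, -, rfl⟩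
      exact aux_deg W b p hdeg v.2
    · rintro g _ ⟨v, hv, rfl⟩
      refine ⟨subRep W (wSpan W b p) (wSpan_stable W b p) g v, ?_, rfl⟩
      have hv' : f v = 0 := hv
      show f _ = 0
      rw [hf.2 g v, hv', map_zero]
    · intro v hv
      exact ⟨⟨v, aux_le W b p hv⟩, h0 v hv, rfl⟩
  ext1 v
  obtain ⟨w, hw, hwv⟩ := key v.2
  have : w = v := Subtype.ext hwv
  subst this
  exact hw

/-- Restriction of equivariant maps from `wSpan` to `p`. -/
lemma aux_restrict {n : ℕ} (W' W : Subgroup (GLn n)) (hle : W' ≤ W) (b d : ℕ)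
    (p : Submodule ℂ (MvPolynomial (Fin n) ℂ)) (hstab : StableUnder W' p)
    (f : wSpan W b p →ₗ[ℂ] MvPolynomial (Fin n) ℂ)
    (hf : f ∈ homSpace W (subRep W (wSpan W b p) (wSpan_stable W b p)) d) :
    f ∘ₗ Submodule.inclusion (aux_le W b p) ∈ homSpace W' (subRep W' p hstab) d :=
  ⟨fun v => hf.1 _, fun g v => hf.2 ⟨g.1, hle g.2⟩ (Submodule.inclusion (aux_le W b p) v)⟩

lemma aux_subtype {n : ℕ} (W : Subgroup (GLn n)) (d : ℕ)
    (p : Submodule ℂ (MvPolynomial (Fin n) ℂ)) (hstab : StableUnder W p)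
    (hdeg : p ≤ MvPolynomial.homogeneousSubmodule (Fin n) ℂ d) :
    p.subtype ∈ homSpace W (subRep W p hstab) d :=
  ⟨fun v => hdeg v.2, fun _ _ => rfl⟩

/-- Averaging: an equivariant projection onto a stable subspace. -/
lemma aux_maschke {n : ℕ} (W : Subgroup (GLn n)) [Finite W] (d : ℕ)
    (E : Submodule ℂ (MvPolynomial (Fin n) ℂ)) (hE : StableUnder W E)
    (hdeg : E ≤ MvPolynomial.homogeneousSubmodule (Fin n) ℂ d)
    (q : Submodule ℂ E) (hq : IsSubrep (subRep W E hE) q) :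
    ∃ F ∈ homSpace W (subRep W E hE) d, (∀ v, ∃ w ∈ q, F v = w) ∧ ∀ v ∈ q, F v = v := by
  classical
  have := Fintype.ofFinite W
  obtain ⟨π, hπ⟩ := LinearMap.exists_leftInverse_of_injective (K := ℂ) (V := q) (V' := E)
    q.subtype q.ker_subtype
  have hπ' : ∀ v (hv : v ∈ q), π v = ⟨v, hv⟩ := fun v hv => LinearMap.congr_fun hπ ⟨v, hv⟩
  set ρ := subRep W E hE with hρ
  let A : E →ₗ[ℂ] E := ((Fintype.card W : ℂ)⁻¹) • ∑ g : W, ρ g ∘ₗ q.subtype ∘ₗ π ∘ₗ ρ g⁻¹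
  have hA : ∀ v, A v = ((Fintype.card W : ℂ)⁻¹) • ∑ g : W, ρ g (π (ρ g⁻¹ v)) := by
    intro v
    simp [A]
  have hcard : (Fintype.card W : ℂ) ≠ 0 := Nat.cast_ne_zero.2 Fintype.card_ne_zero
  have hinv : ∀ (g : W) v, ρ g (ρ g⁻¹ v) = v := by
    intro g v
    rw [← Module.End.mul_apply, ← map_mul, mul_inv_cancel, map_one, Module.End.one_apply]
  have heq : ∀ (h : W) v, A (ρ h v) = ρ h (A v) := by
    intro h v
    rw [hA, hA, map_smul, map_sum]
    congr 1
    rw [← Equiv.sum_comp (Equiv.mulLeft h)]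
    refine Finset.sum_congr rfl fun g _ => ?_
    have hgrp : (h * g)⁻¹ * h = g⁻¹ := by group
    rw [Equiv.coe_mulLeft, map_mul, Module.End.mul_apply, ← Module.End.mul_apply (ρ (h * g)⁻¹),
      ← map_mul, hgrp]
  refine ⟨E.subtype ∘ₗ A, ⟨fun v => hdeg (A v).2, fun g v => ?_⟩, fun v => ⟨A v, ?_, rfl⟩,
    fun v hv => ?_⟩
  · exact congrArg Subtype.val (heq g v)
  · rw [hA]
    exact q.smul_mem _ (q.sum_mem fun g _ => hq g _ (π _).2)
  · refine congrArg Subtype.val (?_ : A v = v)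
    rw [hA, Finset.sum_congr rfl (g := fun _ => v), Finset.sum_const, Finset.card_univ,
      ← Nat.cast_smul_eq_nsmul ℂ, smul_smul, inv_mul_cancel₀ hcard, one_smul]
    intro g _
    rw [hπ' _ (hq g⁻¹ v hv)]
    exact hinv g v

/-- Let `W ⊆ GL(V)` be a finite complex reflection group,
`W′ ⊆ W` a subgroup generated by reflections, and `E′` (`= p`) a `j`-inductible
irreducible representation of `W′`, realized as a `W′`-subrepresentation of
`S^{b(E′)}(V)` (here `b(E′) = b`).  Let `E` be the smallest `W`-stable subspace of
`S^{b(E′)}(V)` containing `E′`.  Then `E` is an irreducible representation of `W`,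
`b(E) = b(E′)`, and `E` is itself `j`-inductible. -/
theorem stmt_4 (n : ℕ) (W' W : Subgroup (GLn n)) (hle : W' ≤ W)
    [Finite W] (hW : IsReflGroup W) (hW' : IsReflGroup W')
    (b : ℕ) (p : Submodule ℂ (MvPolynomial (Fin n) ℂ))
    (hdeg : p ≤ MvPolynomial.homogeneousSubmodule (Fin n) ℂ b)
    (hstab : StableUnder W' p)
    (hirr : IrredRep (subRep W' p hstab))
    (hbE' : bval W' (subRep W' p hstab) = b)
    (hmult : Module.finrank ℂ (homSpace W' (subRep W' p hstab) b) = 1) :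
    IrredRep (subRep W (wSpan W b p) (wSpan_stable W b p)) ∧
      bval W (subRep W (wSpan W b p) (wSpan_stable W b p)) = b ∧
      Module.finrank ℂ (homSpace W (subRep W (wSpan W b p) (wSpan_stable W b p)) b) = 1 := by
  obtain ⟨⟨v0, hv0⟩, -⟩ := hirr
  have hv0' : (v0 : MvPolynomial (Fin n) ℂ) ≠ 0 := fun h => hv0 (Subtype.ext h)
  set E := wSpan W b p with hEdef
  have hEdeg := aux_deg W b p hdeg
  let w0 : E := ⟨v0, aux_le W b p v0.2⟩
  have hw0 : w0 ≠ 0 := fun h => hv0' (congrArg Subtype.val h)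
  have hincl := aux_subtype W b E (wSpan_stable W b p) hEdeg
  have hscal : ∀ f ∈ homSpace W (subRep W E (wSpan_stable W b p)) b, ∃ c : ℂ,
      f = c • E.subtype := by
    intro f hf
    have hs := aux_subtype W' b p hstab hdeg
    have hne : (⟨p.subtype, hs⟩ : homSpace W' (subRep W' p hstab) b) ≠ 0 := by
      intro h
      exact hv0' (LinearMap.congr_fun (congrArg Subtype.val h) v0)
    obtain ⟨c, hc⟩ := (finrank_eq_one_iff_of_nonzero' (K := ℂ)
      (V := homSpace W' (subRep W' p hstab) b) ⟨p.subtype, hs⟩ hne).1 hmult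
      ⟨_, aux_restrict W' W hle b b p hstab f hf⟩
    have hc' := congrArg Subtype.val hc
    refine ⟨c, ?_⟩
    rw [← sub_eq_zero]
    refine aux_zero W b b p hdeg _ (sub_mem hf (Submodule.smul_mem _ c hincl)) ?_
    intro v hv
    have := LinearMap.congr_fun hc' ⟨v, hv⟩
    rw [LinearMap.sub_apply, sub_eq_zero]
    exact this.symm
  have hocc : occursIn W (subRep W E (wSpan_stable W b p)) b := by
    intro h
    have h2 : E.subtype = 0 := by
      have := hincl
      rw [h] at this
      exact this
    exact hv0' (LinearMap.congr_fun h2 w0)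
  refine ⟨⟨⟨w0, hw0⟩, ?_⟩, ?_, ?_⟩
  · intro q hq
    obtain ⟨F, hF, hFq, hFid⟩ := aux_maschke W b E (wSpan_stable W b p) hEdeg q hq
    obtain ⟨c, rfl⟩ := hscal F hF
    by_cases hbot : q = ⊥
    · exact Or.inl hbot
    right
    obtain ⟨v, hv, hvne⟩ := q.ne_bot_iff.1 hbot
    have hc : c ≠ 0 := by
      rintro rfl
      apply hvne
      have := hFid v hv
      rw [zero_smul] at this
      exact Subtype.ext this.symm
    rw [eq_top_iff]
    intro u _
    obtain ⟨w, hw, hcu⟩ := hFq u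
    have h3 : c • u = w := Subtype.ext hcu
    rw [← h3] at hw
    exact (q.smul_mem_iff hc).1 hw
  · apply le_antisymm
    · exact Nat.sInf_le hocc
    · apply le_csInf ⟨b, hocc⟩
      intro d hd
      by_contra! hlt
      apply hd
      rw [eq_bot_iff]
      intro f hf
      have hnot : ¬ occursIn W' (subRep W' p hstab) d := by
        intro h
        have : bval W' (subRep W' p hstab) ≤ d := Nat.sInf_le h
        omega
      have hbot := not_not.1 hnot
      have hr := aux_restrict W' W hle b d p hstab f hf
      rw [hbot] at hr
      have hr0 : f ∘ₗ Submodule.inclusion (aux_le W b p) = 0 := hr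
      exact aux_zero W b d p hdeg f hf fun v hv => LinearMap.congr_fun hr0 ⟨v, hv⟩
  · have hne : (⟨E.subtype, hincl⟩ : homSpace W (subRep W E (wSpan_stable W b p)) b) ≠ 0 := by
      intro h
      exact hv0' (LinearMap.congr_fun (congrArg Subtype.val h) w0)
    refine (finrank_eq_one_iff_of_nonzero' (K := ℂ)
      (V := homSpace W (subRep W E (wSpan_stable W b p)) b) ⟨E.subtype, hincl⟩ hne).2 ?_
    rintro ⟨f, hf⟩
    obtain ⟨c, hc⟩ := hscal f hf
    exact ⟨c, Subtype.ext hc.symm⟩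

end Spets
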